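/- arXiv:1902.07871 — 2 statements merged into one kernel-verified Lean document; each statement's English description precedes it below -/
import Mathlib

section
/- There is a constant c such that K(λ↾n) ≥ n + K(n) − c for every n, where λ is the uniform measure on 2^ℕ; consequently there is a constant c' with C(λ↾n) ≥ n − c' for every n. -/
open MeasureTheory Filter

/-- Cantor space: the space of infinite binary sequences. -/
abbrev Cantor : Type := ℕ → Bool

/-- Finite binary strings. -/
abbrev BStr : Type := List Bool

/-- The cylinder set of sequences extending the string `x`. -/
def cyl (x : BStr) : Set Cantor := {Z | ∀ i : Fin x.length, Z i.1 = x.get i}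

/-- The string of the first `n` bits of `Z`. -/
def seg (Z : Cantor) (n : ℕ) : BStr := List.ofFn fun i : Fin n => Z i.1

/-- `lam` is the uniform (fair-coin product) measure: every cylinder `[x]`
has measure `2^{-|x|}`. -/
def IsUniform (lam : Measure Cantor) : Prop :=
  ∀ x : BStr, lam (cyl x) = (2 : ENNReal)⁻¹ ^ x.length

/-- `(G_m)` is a Martin-Löf test with respect to the measure `ρ`:
the sets `G_m` are uniformly effectively open and `ρ (G_m) ≤ 2^{-m}`. -/
def IsMLTest (ρ : Measure Cantor) (G : ℕ → Set Cantor) : Prop :=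
  (∃ σ : ℕ → ℕ → BStr, Computable₂ σ ∧ ∀ m, G m = ⋃ i, cyl (σ m i)) ∧
  ∀ m, ρ (G m) ≤ (2 : ENNReal)⁻¹ ^ m

/-- `μ` is Martin-Löf absolutely continuous in `ρ`: `inf_m μ(G_m) = 0`
for every `ρ`-Martin-Löf test `(G_m)`. -/
def MLAC (μ ρ : Measure Cantor) : Prop :=
  ∀ G : ℕ → Set Cantor, IsMLTest ρ G → ⨅ m, μ (G m) = 0

/-- `Z` is Martin-Löf random with respect to `lam`. -/
def MLRandom (lam : Measure Cantor) (Z : Cantor) : Prop :=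
  ∀ G : ℕ → Set Cantor, IsMLTest lam G → Z ∉ ⋂ m, G m

/-- `ρ` is a computable measure: `ρ [x]` is a computable real, uniformly in `x`. -/
def ComputableMeasure (ρ : Measure Cantor) : Prop :=
  ∃ q : BStr → ℕ → ℚ, Computable₂ q ∧
    ∀ x k, |(q x k : ℝ) - (ρ (cyl x)).toReal| ≤ (2 : ℝ)⁻¹ ^ k

/-- `U` is a universal plain machine. -/
def UniversalPlain (U : BStr →. BStr) : Prop :=
  Partrec U ∧ ∀ M : BStr →. BStr, Partrec M →
    ∃ c : ℕ, ∀ p x, x ∈ M p → ∃ q : BStr, q.length ≤ p.length + c ∧ x ∈ U q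

/-- The domain of `M` is an antichain under the prefix relation. -/
def PrefixFreeDom (M : BStr →. BStr) : Prop :=
  ∀ p q : BStr, (M p).Dom → (M q).Dom → p <+: q → p = q

/-- `U` is a universal prefix-free machine. -/
def UniversalPrefixFree (U : BStr →. BStr) : Prop :=
  Partrec U ∧ PrefixFreeDom U ∧
  ∀ M : BStr →. BStr, Partrec M → PrefixFreeDom M →
    ∃ c : ℕ, ∀ p x, x ∈ M p → ∃ q : BStr, q.length ≤ p.length + c ∧ x ∈ U q

/-- Kolmogorov complexity of the string `x` with respect to the machine `U`:
the minimal length of a `U`-description of `x`. -/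
noncomputable def cpx (U : BStr →. BStr) (x : BStr) : ℕ :=
  sInf {n | ∃ q : BStr, q.length = n ∧ x ∈ U q}

/-- A natural number `n` identified with the string `0^n`. -/
def numStr (n : ℕ) : BStr := List.replicate n false

/-- Complexity of the natural number `n` (i.e., of the string `0^n`). -/
noncomputable def cpxN (U : BStr →. BStr) (n : ℕ) : ℕ := cpx U (numStr n)

/-- The `μ`-average complexity of the strings of length `n`:
`Σ_{|x|=n} cpx(x) · μ[x]`. -/
noncomputable def avgCpx (U : BStr →. BStr) (μ : Measure Cantor) (n : ℕ) : ℝ :=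
  ∑ v : Fin n → Bool, (cpx U (List.ofFn v) : ℝ) * (μ (cyl (List.ofFn v))).toReal

/-- A measure `μ` is trivial for the complexity given by the machine `U`
(e.g. K-trivial when `U` is the universal prefix-free machine, C-trivial
when `U` is the universal plain machine). -/
def MeasTrivial (U : BStr →. BStr) (μ : Measure Cantor) : Prop :=
  ∃ c : ℝ, ∀ n : ℕ, avgCpx U μ n ≤ (cpxN U n : ℝ) + c

/-! ### Computability tools -/

theorem computable_pow2 : Computable (fun k : ℕ => 2 ^ k) := by
  have h : Computable (fun a : ℕ => Nat.rec (motive := fun _ => ℕ) 1 (fun _ IH => 2 * IH) a) :=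
    Computable.nat_rec (h := fun _ p => 2 * p.2) Computable.id (Computable.const 1)
      ((Primrec.nat_mul.to_comp).comp (Computable.const 2) (Computable.snd.comp Computable.snd)).to₂
  refine h.of_eq fun n => ?_
  induction n with
  | zero => rfl
  | succ n ih => simp only [ih]; ring

theorem computable_numStr : Computable numStr := by
  have h : Computable (fun a : ℕ => Nat.rec (motive := fun _ => BStr) [] (fun _ IH => false :: IH) a) :=
    Computable.nat_rec (h := fun _ p => false :: p.2) Computable.id (Computable.const [])
      (Computable.list_cons.comp (Computable.const false) (Computable.snd.comp Computable.snd)).to₂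
  refine h.of_eq fun n => ?_
  induction n with
  | zero => rfl
  | succ n ih => simp only [ih]; rfl

theorem computable_eq {α : Type*} [Primcodable α] [DecidableEq α] :
    Computable₂ (fun a b : α => decide (a = b)) :=
  (Primrec.eq (α := α)).decide.to_comp

theorem computable_le : Computable₂ (fun a b : ℕ => decide (a ≤ b)) :=
  Primrec.nat_le.decide.to_comp

theorem exists_dedup {α : Type*} [Primcodable α] [DecidableEq α] (e : ℕ → Option α)
    (he : Computable e) : ∃ e' : ℕ → Option α, Computable e' ∧
      (∀ a, (∃ i, e' i = some a) ↔ ∃ i, e i = some a) ∧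
      ∀ i j a, e' i = some a → e' j = some a → i = j := by
  have hex : ∀ i, ∃ j, e j = e i := fun i => ⟨i, rfl⟩
  have hfirst : Computable (fun i => Nat.find (hex i)) := by
    have hp : Partrec (fun i : ℕ => Nat.rfind (fun j => Part.some (decide (e j = e i)))) := by
      refine Partrec.rfind (p := fun i j => Part.some (decide (e j = e i))) ?_
      exact Computable₂.partrec₂ (computable_eq.comp (he.comp Computable.snd)
        (he.comp Computable.fst)).to₂
    refine hp.of_eq_tot fun i => ?_
    refine Nat.mem_rfind.2 ⟨?_, fun {m} hm => ?_⟩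
    · simpa using Nat.find_spec (hex i)
    · simpa using Nat.find_min (hex i) hm
  refine ⟨fun i => cond (decide (Nat.find (hex i) = i)) (e i) none, ?_, ?_, ?_⟩
  · exact Computable.cond (computable_eq.comp hfirst Computable.id) he (Computable.const none)
  · intro a
    constructor
    · rintro ⟨i, hi⟩
      refine ⟨i, ?_⟩
      by_cases h : Nat.find (hex i) = i <;> simp [h] at hi
      exact hi
    · rintro ⟨i, hi⟩
      refine ⟨Nat.find (hex i), ?_⟩
      have h1 : e (Nat.find (hex i)) = e i := Nat.find_spec (hex i)
      have : Nat.find (hex (Nat.find (hex i))) = Nat.find (hex i) := by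
        simp only [h1]
      show (bif decide (Nat.find (hex (Nat.find (hex i))) = Nat.find (hex i)) then
        e (Nat.find (hex i)) else none) = some a
      rw [decide_eq_true this, cond_true, h1, hi]
  · intro i j a hi hj
    by_cases h : Nat.find (hex i) = i <;> simp [h] at hi
    by_cases h' : Nat.find (hex j) = j <;> simp [h'] at hj
    rw [← h, ← h']
    simp only [hi, hj]

theorem computable_rawEnum (c : Nat.Partrec.Code) :
    Computable (fun j : ℕ => (Nat.Partrec.Code.evaln j.unpair.2 c j.unpair.1).bind fun y =>
      (Encodable.decode (α := BStr) j.unpair.1).bind fun p =>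
        (Encodable.decode (α := BStr) y).map fun x => (p, x)) := by
  have hu1 : Computable (fun j : ℕ => j.unpair.1) := Computable.fst.comp Computable.unpair
  have hu2 : Computable (fun j : ℕ => j.unpair.2) := Computable.snd.comp Computable.unpair
  have e1 : Computable (fun j : ℕ => Nat.Partrec.Code.evaln j.unpair.2 c j.unpair.1) :=
    (Nat.Partrec.Code.primrec_evaln.to_comp).comp ((hu2.pair (Computable.const c)).pair hu1)
  have e2 : Computable (fun z : ℕ × ℕ => Encodable.decode (α := BStr) z.1.unpair.1) :=
    Computable.decode.comp (hu1.comp Computable.fst)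
  have e3 : Computable (fun z : (ℕ × ℕ) × BStr => Encodable.decode (α := BStr) z.1.2) :=
    Computable.decode.comp (Computable.snd.comp Computable.fst)
  have e4 : Computable₂ (fun (z : (ℕ × ℕ) × BStr) (x : BStr) => (z.2, x)) :=
    ((Computable.snd.comp Computable.fst).pair Computable.snd).to₂
  have e5 := Computable.option_map e3 e4
  have e6 := Computable.option_bind e2 e5.to₂
  exact Computable.option_bind e1 e6.to₂

theorem exists_enum (f : BStr →. BStr) (hf : Partrec f) :
    ∃ en : ℕ → Option (BStr × BStr), Computable en ∧
      (∀ p x, (∃ i, en i = some (p, x)) ↔ x ∈ f p) ∧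
      ∀ i j a, en i = some a → en j = some a → i = j := by
  obtain ⟨c, hc⟩ := Nat.Partrec.Code.exists_code.1 hf
  obtain ⟨e', h1, h2, h3⟩ := exists_dedup (α := BStr × BStr) _ (computable_rawEnum c)
  refine ⟨e', h1, fun p x => ?_, h3⟩
  rw [h2]
  have key : ∀ (i : ℕ) (p : BStr), Encodable.decode i = some p →
      ∀ y, y ∈ c.eval i ↔ ∃ x ∈ f p, Encodable.encode x = y := by
    intro i p hp y
    rw [hc]; simp [hp]
  constructor
  · rintro ⟨j, hj⟩
    simp only [Option.bind_eq_some_iff, Option.map_eq_some_iff, Prod.mk.injEq] at hj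
    obtain ⟨y, hy, q, hq, z, hz, rfl, rfl⟩ := hj
    have hs := Nat.Partrec.Code.evaln_sound (Option.mem_def.2 hy)
    obtain ⟨x, hx, rfl⟩ := (key _ _ hq _).1 hs
    rw [Encodable.encodek] at hz
    cases hz
    exact hx
  · intro hx
    obtain ⟨t, ht⟩ := Nat.Partrec.Code.evaln_complete.1
      ((key _ p (Encodable.encodek p) _).2 ⟨x, hx, rfl⟩)
    refine ⟨Nat.pair (Encodable.encode p) t, ?_⟩
    simp only [Nat.unpair_pair, Option.mem_def.1 ht, Encodable.encodek, Option.bind_some,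
      Option.map_some]

/-- Weight of an optional exponent. -/
noncomputable def wt (o : Option ℕ) : ℝ := o.elim 0 fun k => (1 / 2) ^ k

/-- Dyadic partial sums, represented as numerator and exponent. -/
def psum (w : ℕ → Option ℕ) (s : ℕ) : ℕ × ℕ :=
  Nat.rec (motive := fun _ => ℕ × ℕ) (0, 0)
    (fun i r => Option.casesOn (w i) r fun k => (r.1 * 2 ^ k + 2 ^ r.2, r.2 + k)) s

theorem psum_spec (w : ℕ → Option ℕ) (s : ℕ) :
    ((psum w s).1 : ℝ) / 2 ^ (psum w s).2 = ∑ i ∈ Finset.range s, wt (w i) := by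
  induction s with
  | zero => simp [psum]
  | succ s ih =>
    rw [Finset.sum_range_succ, ← ih]
    have : psum w (s+1) = Option.casesOn (w s) (psum w s)
      fun k => ((psum w s).1 * 2 ^ k + 2 ^ (psum w s).2, (psum w s).2 + k) := rfl
    rw [this]
    cases w s with
    | none => simp [wt]
    | some k => simp [wt]; field_simp; ring

theorem computable_psum {α : Type*} [Primcodable α] (w : α → ℕ → Option ℕ) (hw : Computable₂ w) :
    Computable₂ (fun a s => psum (w a) s) := by
  unfold psum
  refine Computable.nat_rec (α := α × ℕ) (f := fun p => p.2) (g := fun _ => (0, 0))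
    (h := fun p q => Option.casesOn (w p.1 q.1) q.2
      fun k => (q.2.1 * 2 ^ k + 2 ^ q.2.2, q.2.2 + k)) Computable.snd (Computable.const _) ?_
  refine Computable.option_casesOn (α := (α × ℕ) × (ℕ × (ℕ × ℕ)))
    (o := fun z => w z.1.1 z.2.1) (f := fun z => z.2.2)
    (g := fun z k => (z.2.2.1 * 2 ^ k + 2 ^ z.2.2.2, z.2.2.2 + k)) ?_ ?_ ?_
  · exact hw.comp (Computable.fst.comp Computable.fst) (Computable.fst.comp Computable.snd)
  · exact Computable.snd.comp Computable.snd
  · have a1 : Computable (fun z : ((α × ℕ) × (ℕ × (ℕ × ℕ))) × ℕ => z.1.2.2.1) :=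
      Computable.fst.comp (Computable.snd.comp (Computable.snd.comp Computable.fst))
    have a2 : Computable (fun z : ((α × ℕ) × (ℕ × (ℕ × ℕ))) × ℕ => z.1.2.2.2) :=
      Computable.snd.comp (Computable.snd.comp (Computable.snd.comp Computable.fst))
    have a3 : Computable (fun z : ((α × ℕ) × (ℕ × (ℕ × ℕ))) × ℕ => z.2) := Computable.snd
    exact Computable.pair (Primrec.nat_add.to_comp.comp
      (Primrec.nat_mul.to_comp.comp a1 (computable_pow2.comp a3)) (computable_pow2.comp a2))
      (Primrec.nat_add.to_comp.comp a2 a3)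

/-! ### Kraft–Chaitin -/

/-- Numerical value of a binary string. -/
def bval (p : BStr) : ℕ := p.foldl (fun a b => 2 * a + cond b 1 0) 0

theorem bval_concat (p : BStr) (b : Bool) : bval (p ++ [b]) = 2 * bval p + cond b 1 0 := by
  simp [bval]

theorem computable_bval : Computable bval := by
  have h : Primrec (fun p : BStr => p.foldl (fun (s : ℕ) (b : Bool) =>
      (fun (_ : BStr) (q : ℕ × Bool) => 2 * q.1 + cond q.2 1 0) p (s, b)) 0) := by
    refine Primrec.list_foldl (f := fun p : BStr => p) (g := fun _ => 0)
      (h := fun (_ : BStr) (q : ℕ × Bool) => 2 * q.1 + cond q.2 1 0) Primrec.id (Primrec.const 0) ?_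
    exact Primrec.nat_add.comp
      (Primrec.nat_mul.comp (Primrec.const 2) (Primrec.fst.comp Primrec.snd))
      (Primrec.cond (Primrec.snd.comp Primrec.snd) (Primrec.const 1) (Primrec.const 0))
  exact h.to_comp

theorem bval_append (p r : BStr) :
    bval p * 2 ^ r.length ≤ bval (p ++ r) ∧ bval (p ++ r) + 1 ≤ (bval p + 1) * 2 ^ r.length := by
  induction r using List.reverseRecOn with
  | nil => simp
  | append_singleton r b ih =>
    rw [← List.append_assoc, bval_concat]
    simp only [List.length_append, List.length_singleton, pow_succ]
    obtain ⟨h1, h2⟩ := ih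
    cases b <;> simp <;> constructor <;> nlinarith

theorem exists_bval (m : ℕ) : ∀ v, v < 2 ^ m → ∃ p : BStr, p.length = m ∧ bval p = v := by
  induction m with
  | zero => intro v hv; exact ⟨[], rfl, by simp at hv; simp [bval, hv]⟩
  | succ m ih =>
    intro v hv
    obtain ⟨p, hp, hv'⟩ := ih (v / 2) (by rw [pow_succ] at hv; omega)
    refine ⟨p ++ [decide (v % 2 = 1)], by simp [hp], ?_⟩
    rw [bval_concat, hv']
    rcases Nat.mod_two_eq_zero_or_one v with h | h <;> simp [h] <;> omega

theorem wt_nonneg (o : Option ℕ) : 0 ≤ wt o := by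
  cases o <;> simp [wt]

/-- Search step of the Kraft–Chaitin machine. -/
def kcStep (e : ℕ → Option (ℕ × ℕ)) (p : BStr) (j : ℕ) : Option BStr :=
  (e j).bind fun z =>
    cond (decide (p.length = z.2 + 1) &&
      (decide ((psum (fun i => (e i).map Prod.snd) j).1 * 2 ^ p.length ≤
        bval p * 2 ^ (psum (fun i => (e i).map Prod.snd) j).2) &&
      decide ((bval p + 1) * 2 ^ (psum (fun i => (e i).map Prod.snd) (j + 1)).2 ≤
        (psum (fun i => (e i).map Prod.snd) (j + 1)).1 * 2 ^ p.length)))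
      (some (numStr z.1)) none

theorem computable_kcStep (e : ℕ → Option (ℕ × ℕ)) (he : Computable e) :
    Computable₂ (kcStep e) := by
  have hw : Computable (fun i => (e i).map Prod.snd) :=
    Computable.option_map he (Computable.snd.comp Computable.snd).to₂
  have hps : Computable (fun s => psum (fun i => (e i).map Prod.snd) s) :=
    (computable_psum (fun (_ : Unit) i => (e i).map Prod.snd)
      (hw.comp Computable.snd).to₂).comp (Computable.const ()) Computable.id
  have hP : Computable (fun z : (BStr × ℕ) × (ℕ × ℕ) => z.1.1) :=
    Computable.fst.comp Computable.fst
  have hJ : Computable (fun z : (BStr × ℕ) × (ℕ × ℕ) => z.1.2) :=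
    Computable.snd.comp Computable.fst
  have hN : Computable (fun z : (BStr × ℕ) × (ℕ × ℕ) => z.2.1) :=
    Computable.fst.comp Computable.snd
  have hK : Computable (fun z : (BStr × ℕ) × (ℕ × ℕ) => z.2.2) :=
    Computable.snd.comp Computable.snd
  have hL := Computable.list_length.comp hP
  have h2L := computable_pow2.comp hL
  have hB := computable_bval.comp hP
  have hp0 := hps.comp hJ
  have hp1 := hps.comp (Computable.succ.comp hJ)
  have hmul := Primrec.nat_mul.to_comp
  have hand := Primrec.and.to_comp
  have c1 := computable_eq.comp hL (Computable.succ.comp hK)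
  have c2 := computable_le.comp (hmul.comp (Computable.fst.comp hp0) h2L)
    (hmul.comp hB (computable_pow2.comp (Computable.snd.comp hp0)))
  have c3 := computable_le.comp
    (hmul.comp (Computable.succ.comp hB) (computable_pow2.comp (Computable.snd.comp hp1)))
    (hmul.comp (Computable.fst.comp hp1) h2L)
  have c4 := hand.comp c1 (hand.comp c2 c3)
  have c5 := Computable.cond c4 (Computable.option_some.comp (computable_numStr.comp hN))
    (Computable.const none)
  have c6 := Computable.option_bind (α := BStr × ℕ) (he.comp Computable.snd) c5.to₂
  exact c6

theorem mem_kcStep (e : ℕ → Option (ℕ × ℕ)) (p : BStr) (j : ℕ) (x : BStr) :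
    kcStep e p j = some x ↔ ∃ n k, e j = some (n, k) ∧ p.length = k + 1 ∧
      ∑ i ∈ Finset.range j, wt ((e i).map Prod.snd) ≤ (bval p : ℝ) / 2 ^ p.length ∧
      ((bval p : ℝ) + 1) / 2 ^ p.length ≤ ∑ i ∈ Finset.range (j + 1), wt ((e i).map Prod.snd) ∧
      x = numStr n := by
  rw [← psum_spec, ← psum_spec]
  simp only [div_le_div_iff₀ (pow_pos (zero_lt_two (α := ℝ)) _) (pow_pos (zero_lt_two (α := ℝ)) _)]
  unfold kcStep
  cases e j with
  | none => simp
  | some z =>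
    obtain ⟨n, k⟩ := z
    norm_cast
    simp only [Option.bind_some, Bool.cond_eq_ite, Bool.and_eq_true, decide_eq_true_eq]
    constructor
    · intro h
      split_ifs at h with h'
      cases h
      exact ⟨n, k, rfl, h'.1, h'.2.1, h'.2.2, rfl⟩
    · rintro ⟨n', k', h, h1, h2, h3, rfl⟩
      cases h
      rw [if_pos ⟨h1, h2, h3⟩]

theorem kcStep_unique (e : ℕ → Option (ℕ × ℕ)) (p r : BStr) (i j : ℕ) (x y : BStr)
    (hx : kcStep e p i = some x) (hy : kcStep e (p ++ r) j = some y) : i = j := by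
  rw [mem_kcStep] at hx hy
  obtain ⟨n, k, -, -, h1, h2, -⟩ := hx
  obtain ⟨n', k', -, -, h3, h4, -⟩ := hy
  have hmono : Monotone (fun s => ∑ i ∈ Finset.range s, wt ((e i).map Prod.snd)) := by
    intro a b hab
    exact Finset.sum_le_sum_of_subset_of_nonneg (Finset.range_mono hab)
      (fun _ _ _ => wt_nonneg _)
  obtain ⟨b1, b2⟩ := bval_append p r
  have b1' : (bval p : ℝ) / 2 ^ p.length ≤ (bval (p ++ r) : ℝ) / 2 ^ (p ++ r).length := by
    rw [List.length_append, pow_add, div_le_div_iff₀ (by positivity) (by positivity)]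
    have : (bval p : ℝ) * 2 ^ r.length ≤ bval (p ++ r) := by exact_mod_cast b1
    have h0 : (0 : ℝ) < 2 ^ p.length := by positivity
    nlinarith
  have b2' : ((bval (p ++ r) : ℝ) + 1) / 2 ^ (p ++ r).length ≤ ((bval p : ℝ) + 1) / 2 ^ p.length := by
    rw [List.length_append, pow_add, div_le_div_iff₀ (by positivity) (by positivity)]
    have : (bval (p ++ r) : ℝ) + 1 ≤ (bval p + 1 : ℝ) * 2 ^ r.length := by exact_mod_cast b2
    have h0 : (0 : ℝ) < 2 ^ p.length := by positivity
    nlinarith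
  have b3 : (bval (p ++ r) : ℝ) / 2 ^ (p ++ r).length <
      ((bval (p ++ r) : ℝ) + 1) / 2 ^ (p ++ r).length := by
    apply div_lt_div_of_pos_right (by linarith) (by positivity)
  rcases lt_trichotomy i j with h | h | h
  · have := hmono (show i + 1 ≤ j from h)
    simp only at this
    linarith
  · exact h
  · have := hmono (show j + 1 ≤ i from h)
    simp only at this
    linarith

theorem kraft_chaitin (e : ℕ → Option (ℕ × ℕ)) (he : Computable e)
    (hsum : ∀ s, ∑ i ∈ Finset.range s, wt ((e i).map Prod.snd) ≤ 1) :
    ∃ M : BStr →. BStr, Partrec M ∧ PrefixFreeDom M ∧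
      ∀ i n k, e i = some (n, k) → ∃ p : BStr, p.length = k + 1 ∧ numStr n ∈ M p := by
  have hmem : ∀ p x, x ∈ Nat.rfindOpt (kcStep e p) ↔ ∃ j, kcStep e p j = some x := by
    intro p x
    constructor
    · intro h
      exact Nat.rfindOpt_spec h
    · rintro ⟨j, hj⟩
      have hd : (Nat.rfindOpt (kcStep e p)).Dom := Nat.rfindOpt_dom.2 ⟨j, x, hj⟩
      obtain ⟨y, hy⟩ := Part.dom_iff_mem.1 hd
      obtain ⟨j', hj'⟩ := Nat.rfindOpt_spec hy
      have := kcStep_unique e p [] j j' x y hj (by simpa using hj')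
      subst this
      have hxy : x = y := by
        have := hj.symm.trans hj'
        exact Option.some.inj this
      rwa [hxy]
  refine ⟨fun p => Nat.rfindOpt (kcStep e p), Partrec.rfindOpt (computable_kcStep e he), ?_, ?_⟩
  · rintro p q hp hq ⟨r, rfl⟩
    obtain ⟨x, hx⟩ := Part.dom_iff_mem.1 hp
    obtain ⟨y, hy⟩ := Part.dom_iff_mem.1 hq
    obtain ⟨i, hi⟩ := (hmem _ _).1 hx
    obtain ⟨j, hj⟩ := (hmem _ _).1 hy
    have := kcStep_unique e p r i j x y hi hj
    subst this
    obtain ⟨n, k, h1, h2, -⟩ := (mem_kcStep _ _ _ _).1 hi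
    obtain ⟨n', k', h1', h2', -⟩ := (mem_kcStep _ _ _ _).1 hj
    rw [h1] at h1'
    cases h1'
    have : r.length = 0 := by rw [List.length_append] at h2'; omega
    rw [List.length_eq_zero_iff.1 this, List.append_nil]
  · intro i n k hik
    set A := ∑ j ∈ Finset.range i, wt ((e j).map Prod.snd) with hA
    have hA1 : ∑ j ∈ Finset.range (i + 1), wt ((e j).map Prod.snd) = A + (1 / 2) ^ k := by
      rw [Finset.sum_range_succ, hik]; simp [wt, hA]
    have hA0 : 0 ≤ A := Finset.sum_nonneg fun _ _ => wt_nonneg _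
    have hle := hsum (i + 1)
    rw [hA1] at hle
    have hpow : (0 : ℝ) < 2 ^ (k + 1) := by positivity
    have hhalf : ((1 : ℝ) / 2) ^ k * 2 ^ (k + 1) = 2 := by
      rw [pow_succ, ← mul_assoc, ← mul_pow]; norm_num
    set v := ⌈A * 2 ^ (k + 1)⌉₊ with hv
    have hv1 : A * 2 ^ (k + 1) ≤ v := Nat.le_ceil _
    have hv2 : (v : ℝ) < A * 2 ^ (k + 1) + 1 := Nat.ceil_lt_add_one (by positivity)
    have hv3 : (v : ℝ) + 1 ≤ (A + (1 / 2) ^ k) * 2 ^ (k + 1) := by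
      rw [add_mul, hhalf]; linarith
    have hv4 : v < 2 ^ (k + 1) := by
      have : (v : ℝ) + 1 ≤ 2 ^ (k + 1) := by nlinarith
      have : v + 1 ≤ 2 ^ (k + 1) := by exact_mod_cast this
      omega
    obtain ⟨p, hp, hpv⟩ := exists_bval _ _ hv4
    refine ⟨p, hp, (hmem _ _).2 ⟨i, (mem_kcStep _ _ _ _).2 ⟨n, k, hik, hp, ?_, ?_, rfl⟩⟩⟩
    · rw [hp, hpv, le_div_iff₀ hpow]; exact hv1
    · rw [hp, hpv, div_le_iff₀ hpow, hA1]; exact hv3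

/-! ### The counting theorem -/

theorem kraft_pf (S : Finset BStr) (hpf : ∀ p ∈ S, ∀ q ∈ S, p <+: q → p = q) :
    ∑ p ∈ S, (1 / 2 : ℝ) ^ p.length ≤ 1 := by
  by_cases h0 : [] ∈ S
  · have : S = {[]} := by
      ext p
      simp only [Finset.mem_singleton]
      constructor
      · intro hp; exact (hpf [] h0 p hp ⟨p, rfl⟩).symm
      · rintro rfl; exact h0
    simp [this]
  · have hud : InformationTheory.UniquelyDecodable (S : Set (List Bool)) := by
      intro L₁
      induction L₁ with
      | nil =>
        intro L₂ _ h2 hf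
        cases L₂ with
        | nil => rfl
        | cons a L =>
          exfalso
          simp only [List.flatten_nil, List.flatten_cons] at hf
          have : a = [] := (List.append_eq_nil_iff.1 hf.symm).1
          have ha := h2 a (by simp)
          rw [this] at ha
          exact h0 (by simpa using ha)
      | cons a L ih =>
        intro L₂ h1 h2 hf
        have haS : a ∈ S := by simpa using h1 a (by simp)
        cases L₂ with
        | nil =>
          exfalso
          simp only [List.flatten_nil, List.flatten_cons] at hf
          have : a = [] := (List.append_eq_nil_iff.1 hf).1
          rw [this] at haS
          exact h0 haS
        | cons b L' =>
          have hbS : b ∈ S := by simpa using h2 b (by simp)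
          simp only [List.flatten_cons] at hf
          have hab : a = b := by
            rcases List.append_eq_append_iff.1 hf with ⟨r, h, -⟩ | ⟨r, h, -⟩
            · exact hpf a haS b hbS ⟨r, h.symm⟩
            · exact (hpf b hbS a haS ⟨r, h.symm⟩).symm
          subst hab
          rw [ih L' (fun w hw => h1 w (by simp [hw])) (fun w hw => h2 w (by simp [hw]))
            (List.append_cancel_left hf)]
    have := InformationTheory.kraft_mcmillan_inequality hud
    simpa using this

theorem exists_finset_enum {α : Type*} [DecidableEq α] (e : ℕ → Option α) (g : α → ℕ)
    (hinj : ∀ i j a, e i = some a → e j = some a → i = j) (s : ℕ) :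
    ∃ F : Finset α, (∀ a, a ∈ F ↔ ∃ i < s, e i = some a) ∧
      ∑ i ∈ Finset.range s, wt ((e i).map g) = ∑ a ∈ F, (1 / 2 : ℝ) ^ g a := by
  induction s with
  | zero => exact ⟨∅, by simp, by simp⟩
  | succ s ih =>
    obtain ⟨F, h1, h2⟩ := ih
    rcases h : e s with _ | b
    · refine ⟨F, fun a => ?_, ?_⟩
      · rw [h1]
        constructor
        · rintro ⟨i, hi, ha⟩; exact ⟨i, by omega, ha⟩
        · rintro ⟨i, hi, ha⟩
          refine ⟨i, ?_, ha⟩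
          rcases Nat.lt_succ_iff_lt_or_eq.1 hi with h' | rfl
          · exact h'
          · rw [h] at ha; cases ha
      · rw [Finset.sum_range_succ, h2, h]; simp [wt]
    · have hb : b ∉ F := by
        rw [h1]
        rintro ⟨i, hi, ha⟩
        have := hinj i s b ha h
        omega
      refine ⟨insert b F, fun a => ?_, ?_⟩
      · rw [Finset.mem_insert, h1]
        constructor
        · rintro (rfl | ⟨i, hi, ha⟩)
          · exact ⟨s, by omega, h⟩
          · exact ⟨i, by omega, ha⟩
        · rintro ⟨i, hi, ha⟩
          rcases Nat.lt_succ_iff_lt_or_eq.1 hi with h' | rfl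
          · exact Or.inr ⟨i, h', ha⟩
          · left; rw [h] at ha; exact (Option.some.inj ha).symm
      · rw [Finset.sum_range_succ, h2, h, Finset.sum_insert hb]; simp [wt]; ring

theorem geom_bound (G : Finset ℕ) (m : ℝ) (hm : 0 ≤ m) (h : ∀ k ∈ G, 2 * (1 / 2 : ℝ) ^ k ≤ m) :
    ∑ k ∈ G, (1 / 2 : ℝ) ^ k ≤ m := by
  rcases G.eq_empty_or_nonempty with rfl | hne
  · simpa using hm
  · refine le_trans ?_ (h _ (G.min'_mem hne))
    set a := G.min' hne
    have ha : ∀ k ∈ G, a ≤ k := fun k hk => G.min'_le k hk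
    have h1 : ∑ k ∈ G, (1 / 2 : ℝ) ^ k = (1 / 2 : ℝ) ^ a * ∑ k ∈ G.image (fun k => k - a), (1 / 2 : ℝ) ^ k := by
      rw [Finset.sum_image, Finset.mul_sum]
      · refine Finset.sum_congr rfl fun k hk => ?_
        rw [← pow_add, Nat.add_sub_cancel' (ha k hk)]
      · intro x hx y hy hxy
        have := ha x hx
        have := ha y hy
        simp only at hxy
        omega
    have h2 : ∑ k ∈ G.image (fun k => k - a), (1 / 2 : ℝ) ^ k ≤ 2 := by
      refine le_trans (Finset.sum_le_sum_of_subset_of_nonneg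
        (t := Finset.range ((G.image (fun k => k - a)).sup id + 1)) ?_ ?_)
        (sum_geometric_two_le _)
      · intro k hk
        have := Finset.le_sup (f := id) hk
        simp only [id] at this
        rw [Finset.mem_range]; omega
      · intros; positivity
    rw [h1]
    have : (0 : ℝ) < (1 / 2) ^ a := by positivity
    nlinarith

/-- Exponent contributed by the `i`-th enumerated pair to the output length `n`. -/
def lenW (en : ℕ → Option (BStr × BStr)) (n i : ℕ) : Option ℕ :=
  (en i).bind fun z => cond (decide (z.2.length = n)) (some z.1.length) none

theorem computable_lenW (en : ℕ → Option (BStr × BStr)) (hen : Computable en) :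
    Computable₂ (lenW en) := by
  have c1 : Computable (fun y : (ℕ × ℕ) × (BStr × BStr) => decide (y.2.2.length = y.1.1)) :=
    computable_eq.comp (Computable.list_length.comp (Computable.snd.comp Computable.snd))
      (Computable.fst.comp Computable.fst)
  have c2 : Computable (fun y : (ℕ × ℕ) × (BStr × BStr) => some y.2.1.length) :=
    Computable.option_some.comp
      (Computable.list_length.comp (Computable.fst.comp Computable.snd))
  have c3 := Computable.cond c1 c2 (Computable.const none)
  exact Computable.option_bind (α := ℕ × ℕ) (hen.comp Computable.snd) c3.to₂

/-- Raw enumeration of requests. -/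
def rawReq (en : ℕ → Option (BStr × BStr)) (j : ℕ) : Option (ℕ × ℕ) :=
  cond (decide (2 ^ (psum (lenW en j.unpair.1.unpair.1) j.unpair.2).2 ≤
      (psum (lenW en j.unpair.1.unpair.1) j.unpair.2).1 * 2 ^ j.unpair.1.unpair.2))
    (some (j.unpair.1.unpair.1, j.unpair.1.unpair.2 + 1)) none

theorem computable_rawReq (en : ℕ → Option (BStr × BStr)) (hen : Computable en) :
    Computable (rawReq en) := by
  have hu1 : Computable (fun j : ℕ => j.unpair.1) := Computable.fst.comp Computable.unpair
  have hS : Computable (fun j : ℕ => j.unpair.2) := Computable.snd.comp Computable.unpair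
  have hN := hu1.comp hu1
  have hK := hS.comp hu1
  have hp := (computable_psum _ (computable_lenW en hen)).comp hN hS
  have c1 := computable_le.comp (computable_pow2.comp (Computable.snd.comp hp))
    (Primrec.nat_mul.to_comp.comp (Computable.fst.comp hp) (computable_pow2.comp hK))
  exact Computable.cond c1 (Computable.option_some.comp (hN.pair (Computable.succ.comp hK)))
    (Computable.const none)

theorem rawReq_iff (en : ℕ → Option (BStr × BStr)) (n k : ℕ) :
    (∃ j, rawReq en j = some (n, k)) ↔ 1 ≤ k ∧
      ∃ s, 2 * (1 / 2 : ℝ) ^ k ≤ ∑ i ∈ Finset.range s, wt (lenW en n i) := by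
  have key : ∀ n s k : ℕ, (2 ^ (psum (lenW en n) s).2 ≤ (psum (lenW en n) s).1 * 2 ^ k) ↔
      2 * (1 / 2 : ℝ) ^ (k + 1) ≤ ∑ i ∈ Finset.range s, wt (lenW en n i) := by
    intro n s k
    rw [← psum_spec, le_div_iff₀ (by positivity)]
    have h1 : (2 * (1 / 2 : ℝ) ^ (k + 1)) = 1 / 2 ^ k := by
      rw [pow_succ, one_div_pow]; ring
    rw [h1, div_mul_eq_mul_div, one_mul, div_le_iff₀ (by positivity)]
    norm_cast
  constructor
  · rintro ⟨j, hj⟩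
    unfold rawReq at hj
    rw [Bool.cond_eq_ite] at hj
    split_ifs at hj with h
    rw [decide_eq_true_eq, key] at h
    simp only [Option.some.injEq, Prod.mk.injEq] at hj
    obtain ⟨rfl, rfl⟩ := hj
    exact ⟨by omega, _, h⟩
  · rintro ⟨hk, s, hs⟩
    obtain ⟨k, rfl⟩ : ∃ k', k = k' + 1 := ⟨k - 1, by omega⟩
    refine ⟨Nat.pair (Nat.pair n k) s, ?_⟩
    unfold rawReq
    simp only [Nat.unpair_pair]
    rw [decide_eq_true ((key n s k).2 hs), cond_true]

theorem mass_bound (UK : BStr →. BStr) (hpf : PrefixFreeDom UK) (en : ℕ → Option (BStr × BStr))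
    (hmem : ∀ p x, (∃ i, en i = some (p, x)) ↔ x ∈ UK p)
    (hinj : ∀ i j a, en i = some a → en j = some a → i = j) (N : Finset ℕ) (T : ℕ) :
    ∑ n ∈ N, ∑ i ∈ Finset.range T, wt (lenW en n i) ≤ 1 := by
  rw [Finset.sum_comm]
  have h1 : ∀ i, ∑ n ∈ N, wt (lenW en n i) ≤ wt ((en i).map fun z => z.1.length) := by
    intro i
    unfold lenW
    rcases en i with _ | z
    · simp [wt]
    · have : ∀ n, wt ((some z).bind fun z => cond (decide (z.2.length = n)) (some z.1.length) none)
          = if z.2.length = n then (1 / 2 : ℝ) ^ z.1.length else 0 := by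
        intro n
        by_cases h : z.2.length = n <;> simp [h, wt]
      simp only [this]
      rw [Finset.sum_ite_eq]
      split_ifs <;> simp [wt]
  refine (Finset.sum_le_sum fun i _ => h1 i).trans ?_
  obtain ⟨F, hF, hsum⟩ := exists_finset_enum en (fun z => z.1.length) hinj T
  rw [hsum]
  have hU : ∀ a ∈ F, a.2 ∈ UK a.1 := by
    intro a ha
    obtain ⟨i, -, hi⟩ := (hF a).1 ha
    exact (hmem a.1 a.2).1 ⟨i, hi⟩
  have hinj2 : Set.InjOn (fun a : BStr × BStr => a.1) (F : Set (BStr × BStr)) := by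
    intro a ha b hb hab
    have h1 := hU a ha
    have h2 := hU b hb
    simp only at hab
    rw [hab] at h1
    exact Prod.ext hab (Part.mem_unique h1 h2)
  rw [← Finset.sum_image (f := fun p : BStr => (1 / 2 : ℝ) ^ p.length) hinj2]
  apply kraft_pf
  intro p hp q hq hpq
  obtain ⟨a, ha, rfl⟩ := Finset.mem_image.1 hp
  obtain ⟨b, hb, rfl⟩ := Finset.mem_image.1 hq
  exact hpf _ _ (Part.dom_iff_mem.2 ⟨_, hU a ha⟩) (Part.dom_iff_mem.2 ⟨_, hU b hb⟩) hpq

theorem mass_mono (en : ℕ → Option (BStr × BStr)) (n : ℕ) :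
    Monotone (fun s => ∑ i ∈ Finset.range s, wt (lenW en n i)) := by
  intro a b hab
  exact Finset.sum_le_sum_of_subset_of_nonneg (Finset.range_mono hab) (fun _ _ _ => wt_nonneg _)

theorem req_bound (UK : BStr →. BStr) (hpf : PrefixFreeDom UK) (en : ℕ → Option (BStr × BStr))
    (hmem : ∀ p x, (∃ i, en i = some (p, x)) ↔ x ∈ UK p)
    (hinj : ∀ i j a, en i = some a → en j = some a → i = j)
    (e : ℕ → Option (ℕ × ℕ)) (he : ∀ a, (∃ i, e i = some a) ↔ ∃ i, rawReq en i = some a)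
    (heinj : ∀ i j a, e i = some a → e j = some a → i = j) (s : ℕ) :
    ∑ i ∈ Finset.range s, wt ((e i).map Prod.snd) ≤ 1 := by
  obtain ⟨F, hF, hsum⟩ := exists_finset_enum e Prod.snd heinj s
  rw [hsum]
  have h1 : ∀ z : ℕ × ℕ, ∃ t, z ∈ F →
      2 * (1 / 2 : ℝ) ^ z.2 ≤ ∑ i ∈ Finset.range t, wt (lenW en z.1 i) := by
    intro z
    by_cases hz : z ∈ F
    · obtain ⟨i, -, hi⟩ := (hF z).1 hz
      obtain ⟨-, t, ht⟩ := (rawReq_iff en z.1 z.2).1 ((he z).1 ⟨i, hi⟩)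
      exact ⟨t, fun _ => ht⟩
    · exact ⟨0, fun h => absurd h hz⟩
  choose t ht using h1
  set T := F.sup t
  have h2 : ∀ z ∈ F, 2 * (1 / 2 : ℝ) ^ z.2 ≤ ∑ i ∈ Finset.range T, wt (lenW en z.1 i) :=
    fun z hz => (ht z hz).trans (mass_mono en z.1 (Finset.le_sup hz))
  refine le_trans ?_ (mass_bound UK hpf en hmem hinj (F.image Prod.fst) T)
  rw [← Finset.sum_fiberwise_of_maps_to (t := F.image Prod.fst) (g := Prod.fst)
    (fun z hz => Finset.mem_image_of_mem _ hz)]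
  refine Finset.sum_le_sum fun n _ => ?_
  have hinj3 : Set.InjOn Prod.snd ((F.filter fun z => z.1 = n : Finset (ℕ × ℕ)) : Set (ℕ × ℕ)) := by
    intro a ha b hb hab
    simp only [Finset.coe_filter, Set.mem_ofPred_eq] at ha hb
    exact Prod.ext (ha.2.trans hb.2.symm) hab
  rw [← Finset.sum_image (f := fun k : ℕ => (1 / 2 : ℝ) ^ k) hinj3]
  refine geom_bound _ _ (Finset.sum_nonneg fun _ _ => wt_nonneg _) ?_
  intro k hk
  obtain ⟨z, hz, rfl⟩ := Finset.mem_image.1 hk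
  rw [Finset.mem_filter] at hz
  have := h2 z hz.1
  rwa [hz.2] at this

theorem cpx_le (U : BStr →. BStr) (q x : BStr) (h : x ∈ U q) : cpx U x ≤ q.length :=
  Nat.sInf_le ⟨q, rfl, h⟩

theorem cpx_spec (U : BStr →. BStr) (x : BStr) (h : ∃ q, x ∈ U q) :
    ∃ q : BStr, q.length = cpx U x ∧ x ∈ U q := by
  obtain ⟨q, hq⟩ := h
  exact Nat.sInf_mem (s := {n | ∃ q : BStr, q.length = n ∧ x ∈ U q}) ⟨_, q, rfl, hq⟩

theorem total_pf (UK : BStr →. BStr) (hUK : UniversalPrefixFree UK) (x : BStr) :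
    ∃ q, x ∈ UK q := by
  obtain ⟨c, hc⟩ := hUK.2.2 (fun p => cond (decide (p = ([] : BStr))) (Part.some x) Part.none) (by
      refine (Partrec.cond (computable_eq.comp Computable.id (Computable.const ([] : BStr)))
        (Computable.const x).partrec Partrec.none)) (by
      intro p q hp hq _
      have hh : ∀ r : BStr, (cond (decide (r = ([] : BStr))) (Part.some x) Part.none).Dom → r = [] := by
        intro r hr
        by_contra h
        simp [h] at hr
      rw [hh p hp, hh q hq])
  obtain ⟨q, -, hq⟩ := hc [] x (by simp)
  exact ⟨q, hq⟩

theorem counting (UK : BStr →. BStr) (hUK : UniversalPrefixFree UK) :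
    ∃ c : ℕ, ∀ n, ∑ v : Fin n → Bool, (1 / 2 : ℝ) ^ cpx UK (List.ofFn v) ≤
      (1 / 2 : ℝ) ^ cpxN UK n * 2 ^ c := by
  obtain ⟨en, hen, hmem, hinj⟩ := exists_enum UK hUK.1
  obtain ⟨e, hec, he, heinj⟩ := exists_dedup _ (computable_rawReq en hen)
  obtain ⟨M, hM1, hM2, hM3⟩ := kraft_chaitin e hec
    (req_bound UK hUK.2.1 en hmem hinj e he heinj)
  obtain ⟨c, hc⟩ := hUK.2.2 M hM1 hM2
  refine ⟨c + 3, fun n => ?_⟩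
  have h1 : ∀ v : Fin n → Bool, ∃ i, ∃ q : BStr, q.length = cpx UK (List.ofFn v) ∧
      en i = some (q, List.ofFn v) := by
    intro v
    obtain ⟨q, hq, hx⟩ := cpx_spec UK _ (total_pf UK hUK (List.ofFn v))
    obtain ⟨i, hi⟩ := (hmem _ _).2 hx
    exact ⟨i, q, hq, hi⟩
  choose idx q hq hidx using h1
  have hii : Function.Injective idx := by
    intro v v' h
    have h2 := hidx v
    rw [h, hidx v'] at h2
    simp only [Option.some.injEq, Prod.mk.injEq] at h2
    exact (List.ofFn_injective h2.2).symm
  set T := (Finset.univ.sup idx) + 1 with hT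
  set S := ∑ v : Fin n → Bool, (1 / 2 : ℝ) ^ cpx UK (List.ofFn v) with hS
  have hSm : S ≤ ∑ i ∈ Finset.range T, wt (lenW en n i) := by
    have : S = ∑ i ∈ Finset.univ.image idx, wt (lenW en n i) := by
      rw [Finset.sum_image (hii.injOn), hS]
      refine Finset.sum_congr rfl fun v _ => ?_
      unfold lenW
      simp [hidx v, wt, hq v]
    rw [this]
    refine Finset.sum_le_sum_of_subset_of_nonneg ?_ (fun _ _ _ => wt_nonneg _)
    intro i hi
    obtain ⟨v, -, rfl⟩ := Finset.mem_image.1 hi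
    have := Finset.le_sup (f := idx) (Finset.mem_univ v)
    rw [Finset.mem_range]; omega
  have hS1 : S ≤ 1 := by
    have := mass_bound UK hUK.2.1 en hmem hinj {n} T
    rw [Finset.sum_singleton] at this
    exact hSm.trans this
  have hS0 : 0 < S := Finset.sum_pos (fun _ _ => by positivity) Finset.univ_nonempty
  obtain ⟨k, hk1, hk2⟩ := exists_nat_pow_near_of_lt_one hS0 hS1
    (by norm_num : (0 : ℝ) < 1 / 2) (by norm_num)
  have hreq : ∃ i, e i = some (n, k + 2) := by
    rw [he, rawReq_iff]
    refine ⟨by omega, T, le_trans (le_trans (le_of_eq ?_) hk1.le) hSm⟩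
    ring
  obtain ⟨i, hi⟩ := hreq
  obtain ⟨p, hp, hMp⟩ := hM3 i n (k + 2) hi
  obtain ⟨r, hr, hUr⟩ := hc p _ hMp
  have hK : cpxN UK n ≤ k + 3 + c := (cpx_le UK r _ hUr).trans (by omega)
  have h3 : (1 / 2 : ℝ) ^ (k + 3 + c) ≤ (1 / 2 : ℝ) ^ cpxN UK n :=
    pow_le_pow_of_le_one (by norm_num) (by norm_num) hK
  calc S ≤ (1 / 2 : ℝ) ^ k := hk2
    _ = (1 / 2 : ℝ) ^ (k + 3 + c) * 2 ^ (c + 3) := by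
      rw [show k + 3 + c = k + (c + 3) by ring, pow_add, mul_assoc, ← mul_pow]; norm_num
    _ ≤ _ := by gcongr

theorem two_pow_ge (t : ℤ) : (1 : ℝ) + t ≤ (2 : ℝ) ^ t := by
  rcases le_or_gt 0 t with h | h
  · lift t to ℕ using h
    have := one_add_mul_le_pow (a := (1 : ℝ)) (by norm_num) t
    norm_num at this
    simpa using this
  · have : (t : ℝ) ≤ -1 := by exact_mod_cast (by omega : t ≤ -1)
    have : (0 : ℝ) < (2 : ℝ) ^ t := by positivity
    linarith

theorem avgCpx_uniform (U : BStr →. BStr) (lam : Measure Cantor) (hlam : IsUniform lam) (n : ℕ) :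
    avgCpx U lam n = (∑ v : Fin n → Bool, (cpx U (List.ofFn v) : ℝ)) * (1 / 2) ^ n := by
  unfold avgCpx
  rw [Finset.sum_mul]
  refine Finset.sum_congr rfl fun v _ => ?_
  rw [hlam]
  simp

theorem part_K (UK : BStr →. BStr) (hUK : UniversalPrefixFree UK)
    (lam : Measure Cantor) (hlam : IsUniform lam) :
    ∃ c : ℝ, ∀ n : ℕ, (n : ℝ) + (cpxN UK n : ℝ) - c ≤ avgCpx UK lam n := by
  obtain ⟨c, hc⟩ := counting UK hUK
  refine ⟨c, fun n => ?_⟩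
  rw [avgCpx_uniform UK lam hlam]
  set B : ℤ := n + cpxN UK n - c with hB
  have h1 : ∀ v : Fin n → Bool, (B : ℝ) + 1 - 2 ^ B * (1 / 2 : ℝ) ^ cpx UK (List.ofFn v) ≤
      cpx UK (List.ofFn v) := by
    intro v
    have := two_pow_ge (B - cpx UK (List.ofFn v))
    rw [zpow_sub₀ (by norm_num), zpow_natCast] at this
    push_cast at this
    rw [one_div_pow, mul_one_div]
    linarith
  have h2 := Finset.sum_le_sum (s := Finset.univ) fun v _ => h1 v
  rw [Finset.sum_sub_distrib, ← Finset.mul_sum] at h2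
  simp only [Finset.sum_const, Finset.card_univ, Fintype.card_fun, Fintype.card_bool,
    Fintype.card_fin, nsmul_eq_mul] at h2
  have h3 : (2 : ℝ) ^ B * ∑ v : Fin n → Bool, (1 / 2 : ℝ) ^ cpx UK (List.ofFn v) ≤ 2 ^ n := by
    refine (mul_le_mul_of_nonneg_left (hc n) (by positivity)).trans (le_of_eq ?_)
    rw [hB, zpow_sub₀ (by norm_num), zpow_add₀ (by norm_num), zpow_natCast, zpow_natCast,
      zpow_natCast, one_div_pow]
    field_simp
  push_cast at h2
  have hBr : (B : ℝ) = (n : ℝ) + (cpxN UK n : ℝ) - c := by rw [hB]; push_cast; ring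
  rw [← hBr, one_div_pow, mul_one_div, le_div_iff₀ (by positivity)]
  linarith

theorem part_C (U : BStr →. BStr) (hU : UniversalPlain U)
    (lam : Measure Cantor) (hlam : IsUniform lam) :
    ∃ c' : ℝ, ∀ n : ℕ, (n : ℝ) - c' ≤ avgCpx U lam n := by
  have htot : ∀ x, ∃ q, x ∈ U q := by
    intro x
    obtain ⟨c, hc⟩ := hU.2 (fun p => Part.some p) Partrec.some
    obtain ⟨q, -, hq⟩ := hc x x (by simp)
    exact ⟨q, hq⟩
  refine ⟨2, fun n => ?_⟩
  rw [avgCpx_uniform U lam hlam]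
  have hcard : ∀ m, (Finset.univ.filter fun v : Fin n → Bool => cpx U (List.ofFn v) ≤ m).card
      ≤ 2 ^ (m + 1) := by
    intro m
    choose q hq hqU using fun x => cpx_spec U x (htot x)
    have hqi : Function.Injective (fun v : Fin n → Bool => q (List.ofFn v)) := by
      intro v v' h
      have h1 := hqU (List.ofFn v)
      simp only at h
      rw [h] at h1
      exact List.ofFn_injective (Part.mem_unique h1 (hqU _))
    let F : Finset (Σ l : Fin (m + 1), (Fin l.1 → Bool)) := Finset.univ
    have hF : F.card ≤ 2 ^ (m + 1) := by
      simp only [F, Finset.card_univ, Fintype.card_sigma, Fintype.card_fun, Fintype.card_bool,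
        Fintype.card_fin]
      rw [Fin.sum_univ_eq_sum_range (fun i => 2 ^ i), Nat.geomSum_eq (le_refl 2)]
      simp
    rw [← Finset.card_image_of_injective _ hqi]
    refine le_trans (Finset.card_le_card (t := F.image fun z => List.ofFn z.2) ?_)
      (Finset.card_image_le.trans hF)
    intro p hp
    obtain ⟨v, hv, rfl⟩ := Finset.mem_image.1 hp
    rw [Finset.mem_filter] at hv
    refine Finset.mem_image.2 ⟨⟨⟨(q (List.ofFn v)).length, ?_⟩, fun i => (q (List.ofFn v)).get i⟩,
      Finset.mem_univ _, ?_⟩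
    · rw [hq]; omega
    · exact List.ofFn_get _
  have h1 : ∀ v : Fin n → Bool, n ≤ cpx U (List.ofFn v) +
      ∑ m ∈ Finset.range n, if cpx U (List.ofFn v) ≤ m then 1 else 0 := by
    intro v
    rw [← Finset.sum_filter, Finset.sum_const, smul_eq_mul, mul_one]
    have : Finset.Ico (cpx U (List.ofFn v)) n ⊆
        (Finset.range n).filter fun m => cpx U (List.ofFn v) ≤ m := by
      intro m hm
      simp only [Finset.mem_Ico] at hm
      simp [hm.1, hm.2]
    have := Finset.card_le_card this
    rw [Nat.card_Ico] at this
    omega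
  have h2 : 2 ^ n * n ≤ (∑ v : Fin n → Bool, cpx U (List.ofFn v)) + 2 ^ (n + 1) := by
    have := Finset.sum_le_sum (s := Finset.univ) fun v _ => h1 v
    rw [Finset.sum_add_distrib, Finset.sum_comm] at this
    simp only [Finset.sum_const, Finset.card_univ, Fintype.card_fun, Fintype.card_bool,
      Fintype.card_fin, smul_eq_mul] at this
    refine this.trans (Nat.add_le_add_left ?_ _)
    have h3 : ∀ m ∈ Finset.range n, (∑ v : Fin n → Bool, if cpx U (List.ofFn v) ≤ m then 1 else 0)
        ≤ 2 * 2 ^ m := by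
      intro m _
      rw [← Finset.sum_filter, Finset.sum_const, smul_eq_mul, mul_one, mul_comm, ← pow_succ]
      exact hcard m
    refine (Finset.sum_le_sum h3).trans ?_
    rw [← Finset.mul_sum, Nat.geomSum_eq (le_refl 2), pow_succ]
    simp
    omega
  have h2' : (2 : ℝ) ^ n * n ≤ (∑ v : Fin n → Bool, (cpx U (List.ofFn v) : ℝ)) + 2 ^ (n + 1) := by
    exact_mod_cast h2
  rw [one_div_pow, mul_one_div, le_div_iff₀ (by positivity)]
  rw [pow_succ] at h2'
  linarith

/-- the uniform measure `λ` satisfies `K(λ↾n) ≥ n + K(n) - c`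
for some constant `c` and all `n`, and consequently `C(λ↾n) ≥ n - c'` for
some constant `c'` and all `n`. -/
theorem uniform_measure_max_complexity
    (U UK : BStr →. BStr) (hU : UniversalPlain U) (hUK : UniversalPrefixFree UK)
    (lam : Measure Cantor) (hlam : IsUniform lam) :
    (∃ c : ℝ, ∀ n : ℕ, (n : ℝ) + (cpxN UK n : ℝ) - c ≤ avgCpx UK lam n) ∧
    (∃ c' : ℝ, ∀ n : ℕ, (n : ℝ) - c' ≤ avgCpx U lam n) := by
  exact ⟨part_K UK hUK lam hlam, part_C U hU lam hlam⟩
end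

section
/- Let Γ be a truth-table reduction from 2^ℕ to 2^ℕ: there is a computable, monotone (with respect to the prefix order) map y ↦ Γ^y on binary strings and a strictly increasing computable function f : ℕ → ℕ such that |Γ^y| ≥ n whenever |y| = f(n), inducing a total continuous map Γ : 2^ℕ → 2^ℕ with Γ(Z)↾n determined by Z↾f(n). Let ν be a Borel probability measure on 2^ℕ and μ = Γ(ν) its pushforward. Then K(μ↾n) ≤⁺ K(ν↾f(n)) and C(μ↾n) ≤⁺ C(ν↾f(n)). In particular, if ν is K-trivial then μ is K-trivial, and if ν is C-trivial then μ is C-trivial. -/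
open MeasureTheory Filter

/-- Complexity w.r.t. `U` does not increase (up to a constant) under partial computable maps. -/
def GoodMachine (U : BStr →. BStr) : Prop :=
  ∀ h : BStr →. BStr, Partrec h → ∃ c : ℕ, ∀ y x, x ∈ h y → cpx U x ≤ cpx U y + c

theorem good_aux {U : BStr →. BStr} (hne : ∀ y, ∃ q, y ∈ U q) (h : BStr →. BStr)
    (hc : ∃ c : ℕ, ∀ p x, x ∈ (U p).bind h → ∃ q : BStr, q.length ≤ p.length + c ∧ x ∈ U q) :
    ∃ c : ℕ, ∀ y x, x ∈ h y → cpx U x ≤ cpx U y + c := by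
  obtain ⟨c, hc⟩ := hc
  refine ⟨c, fun y x hx => ?_⟩
  have hmem : cpx U y ∈ {n | ∃ q : BStr, q.length = n ∧ y ∈ U q} := by
    obtain ⟨q, hq⟩ := hne y
    exact Nat.sInf_mem ⟨q.length, q, rfl, hq⟩
  obtain ⟨p, hp, hyp⟩ := hmem
  obtain ⟨q, hq, hxq⟩ := hc p x (Part.mem_bind hyp hx)
  have : cpx U x ≤ q.length := Nat.sInf_le ⟨q, rfl, hxq⟩
  omega

theorem good_plain {U : BStr →. BStr} (hU : UniversalPlain U) : GoodMachine U := by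
  intro h hh
  refine good_aux (fun y => ?_) h (hU.2 _ (hU.1.bind (hh.comp Computable.snd).to₂))
  obtain ⟨c, hc⟩ := hU.2 (fun _ => Part.some y) (Computable.const y).partrec
  obtain ⟨q, -, hq⟩ := hc [] y (Part.mem_some _)
  exact ⟨q, hq⟩

theorem good_prefix {U : BStr →. BStr} (hU : UniversalPrefixFree U) : GoodMachine U := by
  intro h hh
  refine good_aux (fun y => ?_) h (hU.2.2 _ (hU.1.bind (hh.comp Computable.snd).to₂) ?_)
  · obtain ⟨c, hc⟩ := hU.2.2 (fun p => (Nat.rfind fun _ => Part.some (decide (p = []))).map fun _ => y)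
      (by
        refine Partrec.map (Partrec.rfind ?_) (Computable.const y).to₂
        have : Computable (fun p : BStr => decide (p = [])) :=
          (PrimrecPred.decide (Primrec.eq.comp Primrec.id (Primrec.const []))).to_comp
        exact (this.comp Computable.fst).partrec) (by
        have key : ∀ p : BStr, ((Nat.rfind fun _ => Part.some (decide (p = []))).map
            fun _ => y).Dom → p = [] := by
          intro p hp
          have hp' : (Nat.rfind fun _ => Part.some (decide (p = []))).Dom := hp
          have := Nat.rfind_spec (Part.get_mem hp')
          simpa using this
        intro p q hp hq _
        rw [key p hp, key q hq])
    obtain ⟨q, -, hq⟩ := hc [] y (by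
      rw [Part.mem_map_iff]
      refine ⟨0, ?_, rfl⟩
      refine Nat.mem_rfind.2 ⟨by simp, fun {m} hm => absurd hm (Nat.not_lt_zero m)⟩)
    exact ⟨q, hq⟩
  · intro p q hp hq hpq
    exact hU.2.1 p q (Part.Dom.of_bind hp) (Part.Dom.of_bind hq) hpq

theorem measurable_seg_comp {α : Type*} [MeasurableSpace α] (n : ℕ) (F : BStr → α) :
    Measurable fun Z : Cantor => F (seg Z n) := by
  have h1 : Measurable fun (Z : Cantor) (i : Fin n) => Z i.1 :=
    measurable_pi_lambda _ fun i => measurable_pi_apply i.1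
  exact (measurable_of_countable (fun v : Fin n → Bool => F (List.ofFn v))).comp h1

theorem mem_cyl_ofFn {n : ℕ} (v : Fin n → Bool) (Z : Cantor) :
    Z ∈ cyl (List.ofFn v) ↔ (fun i : Fin n => Z i.1) = v := by
  constructor
  · intro h
    funext i
    have := h ⟨i.1, by simp⟩
    simpa using this
  · rintro rfl i
    simp

theorem avg_eq_integral (U : BStr →. BStr) (μ : Measure Cantor) [IsProbabilityMeasure μ] (n : ℕ) :
    avgCpx U μ n = ∫ Z, (cpx U (seg Z n) : ℝ) ∂μ := by
  have h1 : Measurable fun (Z : Cantor) (i : Fin n) => Z i.1 :=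
    measurable_pi_lambda _ fun i => measurable_pi_apply i.1
  have := integral_map (μ := μ) h1.aemeasurable
    (f := fun v : Fin n → Bool => (cpx U (List.ofFn v) : ℝ))
    (measurable_of_countable _).aestronglyMeasurable
  unfold seg
  rw [← this]
  have := Measure.isProbabilityMeasure_map (μ := μ) h1.aemeasurable
  rw [integral_fintype (Integrable.of_finite)]
  unfold avgCpx
  refine Finset.sum_congr rfl fun v _ => ?_
  rw [Measure.real, Measure.map_apply h1 (measurableSet_singleton v), smul_eq_mul, mul_comm]
  congr 3
  ext Z
  exact mem_cyl_ofFn v Z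

theorem integrable_cpx (U : BStr →. BStr) (μ : Measure Cantor) [IsProbabilityMeasure μ] (n : ℕ) :
    Integrable (fun Z => (cpx U (seg Z n) : ℝ)) μ := by
  have h1 : Measurable fun (Z : Cantor) (i : Fin n) => Z i.1 :=
    measurable_pi_lambda _ fun i => measurable_pi_apply i.1
  have := Measure.isProbabilityMeasure_map (μ := μ) h1.aemeasurable
  exact (Integrable.of_finite (μ := μ.map _)
    (f := fun v : Fin n → Bool => (cpx U (List.ofFn v) : ℝ))).comp_measurable h1

theorem seg_getD (Z : Cantor) (i : ℕ) : (seg Z (i + 1)).getD i false = Z i := by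
  rw [List.getD_eq_getElem _ _ (by simp [seg])]
  simp only [seg, List.getElem_ofFn]

theorem bound_of_good (U : BStr →. BStr) (hU : GoodMachine U)
    (γ : BStr → BStr) (hγ : Computable γ)
    (f : ℕ → ℕ) (hf : Computable f) (hfmono : StrictMono f)
    (G : Cantor → Cantor) (hG : ∀ (Z : Cantor) (n : ℕ), (γ (seg Z (f n))).take n = seg (G Z) n)
    (ν : Measure Cantor) [IsProbabilityMeasure ν] :
    (∃ c : ℝ, ∀ n : ℕ, avgCpx U (Measure.map G ν) n ≤ avgCpx U ν (f n) + c) ∧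
    (MeasTrivial U ν → MeasTrivial U (Measure.map G ν)) := by
  have hGm : Measurable G := by
    refine measurable_pi_iff.2 fun i => ?_
    have : (fun Z => G Z i) =
        fun Z => (fun y : BStr => ((γ y).take (i + 1)).getD i false) (seg Z (f (i + 1))) := by
      funext Z
      simp only [hG, seg_getD]
    rw [this]
    exact measurable_seg_comp (f (i + 1)) (fun y : BStr => ((γ y).take (i + 1)).getD i false)
  have := Measure.isProbabilityMeasure_map (μ := ν) hGm.aemeasurable
  have hseg : ∀ (Z : Cantor) n, (seg Z n).length = n := fun Z n => by simp [seg]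
  have main : ∃ c : ℝ, ∀ n : ℕ, avgCpx U (Measure.map G ν) n ≤ avgCpx U ν (f n) + c := by
    have htake : Computable fun a : BStr × ℕ => (γ a.1).take a.2 := by
      have h2 : Computable₂ fun (l : BStr) (n : ℕ) => l.take n :=
        (Primrec.list_take.comp Primrec.snd Primrec.fst).to_comp
      exact h2.comp (hγ.comp Computable.fst) Computable.snd
    obtain ⟨c, hc⟩ := hU
      (fun y => (Nat.rfind fun n => Part.some (decide (f n = y.length))).map fun n => (γ y).take n)
      (by
        refine Partrec.map (Partrec.rfind ?_) htake.to₂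
        have h3 : Computable fun a : BStr × ℕ => decide (f a.2 = a.1.length) :=
          (PrimrecPred.decide (Primrec.eq (α := ℕ))).to_comp.comp
            ((hf.comp Computable.snd).pair (Computable.list_length.comp Computable.fst))
        exact h3.partrec)
    refine ⟨c, fun n => ?_⟩
    rw [avg_eq_integral, avg_eq_integral, integral_map hGm.aemeasurable
      (measurable_seg_comp n fun x => (cpx U x : ℝ)).aestronglyMeasurable]
    have hi := integrable_cpx U ν (f n)
    have : ∫ Z, (cpx U (seg Z (f n)) : ℝ) ∂ν + (c : ℝ) =
        ∫ Z, ((cpx U (seg Z (f n)) : ℝ) + c) ∂ν := by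
      rw [integral_add hi (integrable_const _)]
      simp
    rw [this]
    refine integral_mono ((integrable_cpx U (ν.map G) n).comp_measurable hGm)
      (hi.add (integrable_const _)) fun Z => ?_
    have hm := hc (seg Z (f n)) (seg (G Z) n) (by
      rw [Part.mem_map_iff]
      refine ⟨n, ?_, hG Z n⟩
      refine Nat.mem_rfind.2 ⟨by simp [hseg], fun {m} hm => ?_⟩
      simpa [hseg] using (hfmono hm).ne)
    show (cpx U (seg (G Z) n) : ℝ) ≤ (cpx U (seg Z (f n)) : ℝ) + c
    exact_mod_cast hm
  refine ⟨main, ?_⟩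
  rintro ⟨d, hd⟩
  obtain ⟨c, hc⟩ := main
  obtain ⟨e, he⟩ := hU (fun y => Part.some (numStr (f y.length))) (by
    have hn : Computable numStr := by
      refine Primrec.to_comp ((Primrec.list_map Primrec.list_range
        (Primrec.const false).to₂).of_eq fun n => ?_)
      simp [numStr]
    exact (hn.comp (hf.comp Computable.list_length)).partrec)
  refine ⟨e + d + c, fun n => ?_⟩
  have h1 := he (numStr n) (numStr (f n)) (by simp [numStr])
  have h2 : (cpxN U (f n) : ℝ) ≤ cpxN U n + e := by exact_mod_cast h1
  have h3 := hc n
  have h4 := hd (f n)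
  linarith

/-- let `Γ` be a truth-table reduction, given by a computable
monotone map `γ` on strings with strictly increasing computable use bound `f`
(so that `|Γ^y| ≥ n` whenever `|y| = f(n)`), inducing the total continuous map
`G : 2^ℕ → 2^ℕ` with `G(Z)↾n` determined by `Z↾f(n)`. For the pushforward
`μ = Γ(ν)` of any measure `ν` we have `K(μ↾n) ≤⁺ K(ν↾f(n))` and
`C(μ↾n) ≤⁺ C(ν↾f(n))`; in particular K-triviality and C-triviality of `ν`
are inherited by `μ`. -/
theorem tt_reduction_complexity_bound
    (U UK : BStr →. BStr) (hU : UniversalPlain U) (hUK : UniversalPrefixFree UK)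
    (hlenC : ∀ x : BStr, cpxN U x.length ≤ cpx U x)
    (hlenK : ∀ x : BStr, cpxN UK x.length ≤ cpx UK x)
    (γ : BStr → BStr) (hγ : Computable γ)
    (hmono : ∀ y₁ y₂ : BStr, y₁ <+: y₂ → γ y₁ <+: γ y₂)
    (f : ℕ → ℕ) (hf : Computable f) (hfmono : StrictMono f)
    (huse : ∀ (n : ℕ) (y : BStr), y.length = f n → n ≤ (γ y).length)
    (G : Cantor → Cantor) (hG : ∀ (Z : Cantor) (n : ℕ), (γ (seg Z (f n))).take n = seg (G Z) n)
    (ν : Measure Cantor) [IsProbabilityMeasure ν] :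
    (∃ c : ℝ, ∀ n : ℕ, avgCpx UK (Measure.map G ν) n ≤ avgCpx UK ν (f n) + c) ∧
    (∃ c : ℝ, ∀ n : ℕ, avgCpx U (Measure.map G ν) n ≤ avgCpx U ν (f n) + c) ∧
    (MeasTrivial UK ν → MeasTrivial UK (Measure.map G ν)) ∧
    (MeasTrivial U ν → MeasTrivial U (Measure.map G ν)) := by
  have h1 := bound_of_good UK (good_prefix hUK) γ hγ f hf hfmono G hG ν
  have h2 := bound_of_good U (good_plain hU) γ hγ f hf hfmono G hG ν
  exact ⟨h1.1, h2.1, h1.2, h2.2⟩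
end
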